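/- Let 1 < p⃗ < ∞, 0 < q ≤ ∞, 1 < v < ∞, and 0 ≤ λ < 1/p_1+⋯+1/p_n. For measurable functions (f_j)_{j=1}^∞ on ℝ^n and for each r > 0 let f_{j,2} := f_j·χ_{ℝ^n∖Q(0,5r)} denote the part of f_j supported away from the cube Q(0,5r). Then ∫_0^∞ r^{-λq} ‖(Σ_{j=1}^∞ (Mf_{j,2})^v)^{1/v}·χ_{Q(0,r)}‖_{L^{p⃗}}^q dr/r ≤ C‖(Σ_{j=1}^∞ |f_j|^v)^{1/v}‖_{LM^λ_{p⃗,q}}^q, with C independent of (f_j). -/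

import Mathlib

/-!
Write `G = (∑ |f_j|^v)^{1/v}`, `S = ∑ 1/pᵢ` and `N(t) = ‖G χ_{Q(0,t)}‖_{L^p}`.

If a cube of radius `R` meets `Q(0,r)` and the complement of `Q(0,5r)`, then `R > 2r` and the cube
lies in `Q(0,3R)`. Hence on `Q(0,r)` the maximal function of `f_{j,2}` is at most `3^n` times the
supremum over `k` of `(2^k r)^{-n} ∫_{Q(0,2^k r)} |f_j|` (`maximalE_far_le`). Bounding the `v`-th
power of the supremum by the sum over `k` and exchanging sums, Minkowski's integral inequality in
`ℓ^v` (`tsum_lintegral_rpow_le`) replaces the `f_j` by `G`, and Hölder's inequality for the mixed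
norm (`lintegral_le_mixedNorm`) bounds `∫_{Q(0,t)} G` by `(2t)^{n-S} N(t)`. The resulting bound
is constant on `Q(0,r)`, whose indicator has mixed norm at most `(2r)^S` (`mixedNorm_const_cube`).
Altogether (`far_part_le`) the norm of the far part on `Q(0,r)` is at most
`6^n (∑_k (2^{-kS} N(2^k r))^v)^{1/v}`.

In the Morrey scale the dilation `r ↦ 2^k r` costs `2^{kλ}`, because `dr/r` is dilation invariant,
and `λ < S` leaves a convergent geometric series. Half of the decay `2^{-k(S-λ)}` is spent to pass
from the `ℓ^v` sum to a supremum over `k` (`tsum_rpow_le_iSup`), the other half to sum over `k` after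
raising to the power `q` (`morreyScale_iSup_le`); this treats all `0 < q < ∞` alike. For `q = ∞` the
monotonicity of `N` turns the essential supremum into a pointwise bound.
-/

open MeasureTheory ENNReal NNReal Set Filter

noncomputable section

namespace LMM

/-- `L^p` "norm" (with the usual `essSup` convention for `p = ∞`)
of an `ℝ≥0∞`-valued function on `ℝ` with respect to a measure `μ`. -/
def lpNormE (p : ℝ≥0∞) (g : ℝ → ℝ≥0∞) (μ : Measure ℝ) : ℝ≥0∞ :=
  if p = ∞ then essSup g μ else (∫⁻ t, g t ^ p.toReal ∂μ) ^ (1 / p.toReal)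

/-- Iterated mixed Lebesgue norm of an `ℝ≥0∞`-valued function on `ℝ^n`:
the innermost integration is in the variable `x 1` with exponent `p 1`,
the outermost in `x n` with exponent `p n`. -/
def mixedNorm : (n : ℕ) → (Fin n → ℝ≥0∞) → ((Fin n → ℝ) → ℝ≥0∞) → ℝ≥0∞
  | 0, _, g => g finZeroElim
  | (n + 1), p, g =>
      lpNormE (p (Fin.last n))
        (fun t => mixedNorm n (fun i => p i.castSucc) (fun x => g (Fin.snoc x t)))
        volume

/-- Mixed Lebesgue norm of `g` restricted to a set `S`. -/
def mixedNormOn (n : ℕ) (p : Fin n → ℝ≥0∞) (g : (Fin n → ℝ) → ℝ≥0∞)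
    (S : Set (Fin n → ℝ)) : ℝ≥0∞ :=
  mixedNorm n p (S.indicator g)

/-- The (closed) cube centered at `c` with side length `2 * r`. -/
def cubeAt {n : ℕ} (c : Fin n → ℝ) (r : ℝ) : Set (Fin n → ℝ) := {x | ∀ i, |x i - c i| ≤ r}

/-- The cube `Q(0, r)` centered at the origin with side length `2 * r`. -/
def cube0 (n : ℕ) (r : ℝ) : Set (Fin n → ℝ) := cubeAt 0 r

/-- Euclidean norm on `Fin n → ℝ`. -/
def euclNorm {n : ℕ} (x : Fin n → ℝ) : ℝ := Real.sqrt (∑ i, x i ^ 2)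

/-- The closed Euclidean ball of radius `r` centered at the origin. -/
def closedBall0 (n : ℕ) (r : ℝ) : Set (Fin n → ℝ) := {x | euclNorm x ≤ r}

/-- The local mixed Morrey-type quasi-norm `‖·‖_{LM_{p θ, w}}` of an
`ℝ≥0∞`-valued function. -/
def LMnormE (n : ℕ) (p : Fin n → ℝ≥0∞) (θ : ℝ≥0∞) (w : ℝ → ℝ)
    (g : (Fin n → ℝ) → ℝ≥0∞) : ℝ≥0∞ :=
  lpNormE θ (fun r => ENNReal.ofReal (w r) * mixedNormOn n p g (cube0 n r))
    (volume.restrict (Ioi (0 : ℝ)))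

/-- The local mixed Morrey-type quasi-norm of a real-valued function. -/
def LMnorm (n : ℕ) (p : Fin n → ℝ≥0∞) (θ : ℝ≥0∞) (w : ℝ → ℝ)
    (f : (Fin n → ℝ) → ℝ) : ℝ≥0∞ :=
  LMnormE n p θ w (fun x => (‖f x‖₊ : ℝ≥0∞))

/-- `1/p₁ + ⋯ + 1/pₙ`. -/
def sumInv {n : ℕ} (p : Fin n → ℝ≥0∞) : ℝ := ∑ i, ((p i)⁻¹).toReal

/-- Hardy–Littlewood maximal operator (over cubes) of an `ℝ≥0∞`-valued function. -/
def maximalE {n : ℕ} (g : (Fin n → ℝ) → ℝ≥0∞) (x : Fin n → ℝ) : ℝ≥0∞ :=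
  ⨆ (c : Fin n → ℝ) (r : ℝ) (_ : 0 < r) (_ : x ∈ cubeAt c r),
    (volume (cubeAt c r))⁻¹ * ∫⁻ y in cubeAt c r, g y

/-- Hardy–Littlewood maximal operator of a real-valued function. -/
def maximal {n : ℕ} (f : (Fin n → ℝ) → ℝ) : (Fin n → ℝ) → ℝ≥0∞ :=
  maximalE (fun y => (‖f y‖₊ : ℝ≥0∞))

/-- Weighted `L^θ` norm `‖v · g‖_{L^θ(0,∞)}` of an `ℝ≥0∞`-valued function. -/
def wLpE (θ : ℝ≥0∞) (v : ℝ → ℝ) (g : ℝ → ℝ≥0∞) : ℝ≥0∞ :=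
  lpNormE θ (fun r => ENNReal.ofReal (v r) * g r) (volume.restrict (Ioi (0 : ℝ)))

/-- The dual Hardy operator `H* g (r) = ∫_r^∞ g`. -/
def dualHardyE (g : ℝ → ℝ≥0∞) (r : ℝ) : ℝ≥0∞ := ∫⁻ t in Ioi r, g t

/-- The Hardy operator `H g (r) = ∫_0^r g`. -/
def hardyE (g : ℝ → ℝ≥0∞) (r : ℝ) : ℝ≥0∞ := ∫⁻ t in Ioo 0 r, g t

/-- The weight `v̂₁(r) = r^{-(1/p₁+⋯+1/pₙ)-1} w(r)`. -/
def vhat1 {n : ℕ} (p : Fin n → ℝ≥0∞) (w : ℝ → ℝ) (r : ℝ) : ℝ :=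
  r ^ (-(sumInv p) - 1) * w r

/-- The weight `v̂₂(r) = r^{-(1/p₁+⋯+1/pₙ)} w(r)`. -/
def vhat2 {n : ℕ} (p : Fin n → ℝ≥0∞) (w : ℝ → ℝ) (r : ℝ) : ℝ :=
  r ^ (-(sumInv p)) * w r

/-- Boundedness of the dual Hardy operator `H*` from `L_{θ,v₁}(0,∞)` to `L_{θ,v₂}(0,∞)`. -/
def DualHardyBounded (θ : ℝ≥0∞) (v1 v2 : ℝ → ℝ) : Prop :=
  ∃ C : ℝ≥0, ∀ g : ℝ → ℝ≥0∞, Measurable g → wLpE θ v2 (dualHardyE g) ≤ C * wLpE θ v1 g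

/-- Boundedness of the Hardy operator `H` from `L_{θ,v₁}(0,∞)` to `L_{θ,v₂}(0,∞)`. -/
def HardyBounded (θ : ℝ≥0∞) (v1 v2 : ℝ → ℝ) : Prop :=
  ∃ C : ℝ≥0, ∀ g : ℝ → ℝ≥0∞, Measurable g → wLpE θ v2 (hardyE g) ≤ C * wLpE θ v1 g

/-- The class `Ω_θ`. -/
def OmegaTheta (θ : ℝ≥0∞) (w : ℝ → ℝ) : Prop :=
  Measurable w ∧ (∀ r, 0 ≤ w r) ∧
    ¬ (∀ᵐ r ∂(volume.restrict (Ioi (0 : ℝ))), w r = 0) ∧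
    ∃ t > (0 : ℝ), lpNormE θ (fun r => ENNReal.ofReal (w r)) (volume.restrict (Ioi t)) < ∞

/-- The class `Ω_{p,θ}`. -/
def OmegaPTheta {n : ℕ} (p : Fin n → ℝ≥0∞) (θ : ℝ≥0∞) (w : ℝ → ℝ) : Prop :=
  Measurable w ∧ (∀ r, 0 ≤ w r) ∧
    ¬ (∀ᵐ r ∂(volume.restrict (Ioi (0 : ℝ))), w r = 0) ∧
    (∃ t > (0 : ℝ), lpNormE θ (fun r => ENNReal.ofReal (w r)) (volume.restrict (Ioi t)) < ∞) ∧
    (∃ t > (0 : ℝ), lpNormE θ (fun r => ENNReal.ofReal (w r * r ^ sumInv p))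
        (volume.restrict (Ioo (0 : ℝ) t)) < ∞)

/-- The doubling condition `C⁻¹ w(r) ≤ w(2r) ≤ C w(r)` for all `r > 0`. -/
def Doubling (w : ℝ → ℝ) : Prop :=
  ∃ C : ℝ, 0 < C ∧ ∀ r > (0 : ℝ), C⁻¹ * w r ≤ w (2 * r) ∧ w (2 * r) ≤ C * w r

/-- Conjugate exponent in `ℝ≥0∞`. -/
def conjE (p : ℝ≥0∞) : ℝ≥0∞ := (1 - p⁻¹)⁻¹

/-- `A` is a `(p', w, R)`-block: supported in `Q(0,R)` with `‖A‖_{L^{p'}} ≤ w(R)`. -/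
def IsBlock {n : ℕ} (p' : Fin n → ℝ≥0∞) (w : ℝ → ℝ) (R : ℝ)
    (A : (Fin n → ℝ) → ℝ) : Prop :=
  Measurable A ∧ (∀ x ∉ cube0 n R, A x = 0) ∧
    mixedNorm n p' (fun x => (‖A x‖₊ : ℝ≥0∞)) ≤ ENNReal.ofReal (w R)

/-- `ℓ^q` norm of a `ℤ`-indexed real sequence. -/
def ellNorm (q : ℝ≥0∞) (a : ℤ → ℝ) : ℝ≥0∞ :=
  if q = ∞ then ⨆ j, (‖a j‖₊ : ℝ≥0∞)
  else (∑' j, (‖a j‖₊ : ℝ≥0∞) ^ q.toReal) ^ (1 / q.toReal)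

/-- Membership in the local block space `LH_{p' θ', w}`. -/
def MemLH {n : ℕ} (p' : Fin n → ℝ≥0∞) (θ' : ℝ≥0∞) (w : ℝ → ℝ)
    (g : (Fin n → ℝ) → ℝ) : Prop :=
  ∃ (lam : ℤ → ℝ) (A : ℤ → (Fin n → ℝ) → ℝ),
    (∀ j, IsBlock p' w ((2 : ℝ) ^ j) (A j)) ∧
    (∀ᵐ x, HasSum (fun j => lam j * A j x) (g x)) ∧ ellNorm θ' lam < ∞

/-- The local block space norm `‖g‖_{LH_{p' θ', w}}`. -/
def LHnorm {n : ℕ} (p' : Fin n → ℝ≥0∞) (θ' : ℝ≥0∞) (w : ℝ → ℝ)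
    (g : (Fin n → ℝ) → ℝ) : ℝ≥0∞ :=
  ⨅ (lam : ℤ → ℝ) (A : ℤ → (Fin n → ℝ) → ℝ)
    (_ : (∀ j, IsBlock p' w ((2 : ℝ) ^ j) (A j)) ∧
         ∀ᵐ x, HasSum (fun j => lam j * A j x) (g x)),
    ellNorm θ' lam

/-- `(∫_0^∞ (r^{-λ} A(r))^q dr/r)^{1/q}` (essential supremum when `q = ∞`). -/
def morreyScale (q : ℝ≥0∞) (lam : ℝ) (A : ℝ → ℝ≥0∞) : ℝ≥0∞ :=
  if q = ∞ then essSup (fun r => ENNReal.ofReal (r ^ (-lam)) * A r) (volume.restrict (Ioi (0 : ℝ)))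
  else (∫⁻ r in Ioi (0 : ℝ),
      (ENNReal.ofReal (r ^ (-lam)) * A r) ^ q.toReal * ENNReal.ofReal r⁻¹) ^ (1 / q.toReal)

/-- The local mixed Morrey norm `‖·‖_{LM^λ_{p,q}}` (cubes `Q(0,r)`). -/
def LMlamQ (n : ℕ) (p : Fin n → ℝ≥0∞) (q : ℝ≥0∞) (lam : ℝ)
    (g : (Fin n → ℝ) → ℝ≥0∞) : ℝ≥0∞ :=
  morreyScale q lam (fun r => mixedNormOn n p g (cube0 n r))

/-- The local mixed Morrey norm `‖·‖_{LM^λ_{p,q}}` (balls `B(0,r)`). -/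
def LMlamB (n : ℕ) (p : Fin n → ℝ≥0∞) (q : ℝ≥0∞) (lam : ℝ)
    (g : (Fin n → ℝ) → ℝ≥0∞) : ℝ≥0∞ :=
  morreyScale q lam (fun r => mixedNormOn n p g (closedBall0 n r))

/-- Condition (★) on the auxiliary exponent vector `s`. -/
def StarCond {n : ℕ} (p s : Fin n → ℝ≥0∞) (w : ℝ → ℝ) : Prop :=
  ∃ C : ℝ, ∀ r : ℝ, 0 < r →
    (∫⁻ t in Ioi r,
        ENNReal.ofReal (t ^ (sumInv s / (n : ℝ) - sumInv p / (n : ℝ) - 1) / w (r * t)))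
      ≤ ENNReal.ofReal (C * (r ^ (sumInv p / (n : ℝ) - sumInv s / (n : ℝ)) / w r))

/-- `ℓ^u`-norm (`sup` for `u = ∞`) of an `ℕ`-indexed family in `ℝ≥0∞`. -/
def vecNorm (u : ℝ≥0∞) (a : ℕ → ℝ≥0∞) : ℝ≥0∞ :=
  if u = ∞ then ⨆ j, a j else (∑' j, a j ^ u.toReal) ^ (1 / u.toReal)

/-- Operator norm of the functional `g ↦ ∫ f g` on the local block space. -/
def dualNormOf (n : ℕ) (p : Fin n → ℝ≥0∞) (θ : ℝ≥0∞) (w : ℝ → ℝ)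
    (f : (Fin n → ℝ) → ℝ) : ℝ≥0∞ :=
  ⨆ (g : (Fin n → ℝ) → ℝ) (_ : MemLH (fun i => conjE (p i)) (conjE θ) w g)
    (_ : LHnorm (fun i => conjE (p i)) (conjE θ) w g ≤ 1),
    ENNReal.ofReal |∫ x, f x * g x|

/-- `sup_{t>0} |e^{tΔ}f(x)|` for a (locally integrable) function `f`. -/
def heatSup (n : ℕ) (f : (Fin n → ℝ) → ℝ) (x : Fin n → ℝ) : ℝ≥0∞ :=
  ⨆ (t : ℝ) (_ : 0 < t),
    ENNReal.ofReal
      |∫ y, (4 * Real.pi * t) ^ (-(n : ℝ) / 2) *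
          Real.exp (-(∑ i, (x i - y i) ^ 2) / (4 * t)) * f y|

/-- The Schwartz seminorm `ρ_N`. -/
def rhoN {n : ℕ} (N : ℕ) (φ : SchwartzMap (Fin n → ℝ) ℝ) : ℝ≥0∞ :=
  ∑ k ∈ Finset.range (N + 1),
    ⨆ x : Fin n → ℝ, ENNReal.ofReal ((1 + euclNorm x) ^ N * ‖iteratedFDeriv ℝ k (⇑φ) x‖)

/-- The grand maximal operator of a (locally integrable) function. -/
def grandMaxF {n : ℕ} (N : ℕ) (f : (Fin n → ℝ) → ℝ) (x : Fin n → ℝ) : ℝ≥0∞ :=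
  ⨆ (φ : SchwartzMap (Fin n → ℝ) ℝ) (_ : rhoN N φ ≤ 1) (t : ℝ) (_ : 0 < t),
    ENNReal.ofReal |∫ y, t ^ (-(n : ℝ)) * φ (fun i => (x i - y i) / t) * f y|

/-- The `n`-dimensional Hardy operator `Hf(x) = |x|^{-n} ∫_{|y|<|x|} f(y) dy`. -/
def hardyOp {n : ℕ} (f : (Fin n → ℝ) → ℝ) (x : Fin n → ℝ) : ℝ :=
  (euclNorm x) ^ (-(n : ℝ)) * ∫ y in {y : Fin n → ℝ | euclNorm y < euclNorm x}, f y

end LMM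

namespace LMM

/-! ### Cubes and mixed norms -/

lemma cubeAt_eq_closedBall {n : ℕ} (c : Fin n → ℝ) {r : ℝ} (hr : 0 ≤ r) :
    cubeAt c r = Metric.closedBall c r := by
  ext x
  simp only [cubeAt, mem_ofPred_eq, Metric.mem_closedBall, dist_pi_le_iff hr, Real.dist_eq]

lemma measurableSet_cubeAt {n : ℕ} (c : Fin n → ℝ) {r : ℝ} (hr : 0 ≤ r) :
    MeasurableSet (cubeAt c r) := by
  rw [cubeAt_eq_closedBall c hr]; exact measurableSet_closedBall

lemma volume_cubeAt {n : ℕ} (c : Fin n → ℝ) {r : ℝ} (hr : 0 ≤ r) :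
    volume (cubeAt c r) = ENNReal.ofReal (2 * r) ^ n := by
  rw [cubeAt_eq_closedBall c hr, Real.volume_pi_closedBall c hr, Fintype.card_fin,
    ENNReal.ofReal_pow (by positivity)]

lemma lpNormE_mono {p : ℝ≥0∞} (hp' : p ≠ ∞) {g h : ℝ → ℝ≥0∞}
    (hgh : ∀ t, g t ≤ h t) (μ : Measure ℝ) : lpNormE p g μ ≤ lpNormE p h μ := by
  simp only [lpNormE, hp', if_false]
  gcongr with t
  exact hgh t

lemma mixedNorm_mono : ∀ (n : ℕ) (p : Fin n → ℝ≥0∞) (_ : ∀ i, p i ≠ ∞)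
    {g h : (Fin n → ℝ) → ℝ≥0∞} (_ : ∀ x, g x ≤ h x), mixedNorm n p g ≤ mixedNorm n p h
  | 0, _, _, _, _, hgh => hgh _
  | (n + 1), _, hp, _, _, hgh =>
      lpNormE_mono (hp _)
        (fun _ => mixedNorm_mono n _ (fun i => hp i.castSucc) (fun _ => hgh _)) _

lemma mixedNorm_zero : ∀ (n : ℕ) (p : Fin n → ℝ≥0∞) (_ : ∀ i, 1 < p i ∧ p i < ∞),
    mixedNorm n p (fun _ => 0) = 0
  | 0, _, _ => rfl
  | (n + 1), p, hp => by
      have h := mixedNorm_zero n (fun i => p i.castSucc) (fun i => hp i.castSucc)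
      have h0 := ENNReal.toReal_pos (zero_lt_one.trans (hp (Fin.last n)).1).ne'
        (hp (Fin.last n)).2.ne
      simp [mixedNorm, h, lpNormE, (hp (Fin.last n)).2.ne, h0]

lemma sumInv_succ {n : ℕ} (p : Fin (n + 1) → ℝ≥0∞) :
    sumInv p = sumInv (fun i => p i.castSucc) + 1 / (p (Fin.last n)).toReal := by
  simp [sumInv, Fin.sum_univ_castSucc, ENNReal.toReal_inv]

lemma snoc_mem_cube0 {n : ℕ} {r : ℝ} (x : Fin n → ℝ) (t : ℝ) :
    (Fin.snoc x t : Fin (n + 1) → ℝ) ∈ cube0 (n + 1) r ↔ x ∈ cube0 n r ∧ t ∈ Icc (-r) r := by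
  simp [cube0, cubeAt, Fin.forall_fin_succ', abs_le]

/-- The mixed norm of a constant on a cube of side `2r`: each variable contributes `(2r)^{1/pᵢ}`. -/
lemma mixedNorm_const_cube (c : ℝ≥0∞) {r : ℝ} (hr : 0 < r) :
    ∀ (n : ℕ) (p : Fin n → ℝ≥0∞) (_ : ∀ i, 1 < p i ∧ p i < ∞),
    mixedNorm n p ((cube0 n r).indicator (fun _ => c)) ≤ c * ENNReal.ofReal (2 * r) ^ sumInv p
  | 0, _, _ => by
      simp [mixedNorm, sumInv, cube0, cubeAt]
  | (n + 1), p, hp => by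
      have ih := mixedNorm_const_cube c hr n (fun i => p i.castSucc) (fun i => hp i.castSucc)
      have h0 := ENNReal.toReal_pos (zero_lt_one.trans (hp (Fin.last n)).1).ne'
        (hp (Fin.last n)).2.ne
      set V := c * ENNReal.ofReal (2 * r) ^ sumInv (fun i => p i.castSucc)
      have key : ∀ t : ℝ, mixedNorm n (fun i => p i.castSucc)
          (fun x => (cube0 (n + 1) r).indicator (fun _ => c) (Fin.snoc x t)) ≤
          (Icc (-r) r).indicator (fun _ => V) t := by
        intro t
        by_cases ht : t ∈ Icc (-r) r
        · rw [indicator_of_mem ht]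
          refine le_trans (le_of_eq ?_) ih
          congr 1
          ext x
          by_cases hx : x ∈ cube0 n r
          · rw [indicator_of_mem hx, indicator_of_mem ((snoc_mem_cube0 x t).2 ⟨hx, ht⟩)]
          · rw [indicator_of_notMem hx,
              indicator_of_notMem (fun h => hx ((snoc_mem_cube0 x t).1 h).1)]
        · rw [indicator_of_notMem ht]
          refine le_of_eq ((congrArg _ ?_).trans (mixedNorm_zero n _ (fun i => hp i.castSucc)))
          ext x
          rw [indicator_of_notMem (fun h => ht ((snoc_mem_cube0 x t).1 h).2)]
      refine (lpNormE_mono (hp (Fin.last n)).2.ne key volume).trans (le_of_eq ?_)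
      simp only [lpNormE, (hp (Fin.last n)).2.ne, if_false]
      have e : (fun t => (Icc (-r) r).indicator (fun _ => V) t ^ (p (Fin.last n)).toReal) =
          (Icc (-r) r).indicator (fun _ => V ^ (p (Fin.last n)).toReal) := by
        ext t
        by_cases ht : t ∈ Icc (-r) r
        · simp [indicator_of_mem ht]
        · simp [indicator_of_notMem ht, h0]
      rw [e, lintegral_indicator measurableSet_Icc, setLIntegral_const, Real.volume_Icc,
        ENNReal.mul_rpow_of_nonneg _ _ (by positivity), ← ENNReal.rpow_mul,
        mul_one_div_cancel h0.ne', ENNReal.rpow_one, sumInv_succ,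
        ENNReal.rpow_add _ _ (by simpa using hr) ENNReal.ofReal_ne_top, ← mul_assoc]
      congr 3
      ring

/-- Hölder's inequality for the mixed norm on a cube, by iterating the one-dimensional
inequality. Applying the latter to the partial integrals, whose measurability is Tonelli's theorem,
avoids any measurability question about the iterated norms. -/
lemma lintegral_le_mixedNorm {t : ℝ} (ht : 0 < t) :
    ∀ (n : ℕ) (p : Fin n → ℝ≥0∞) (_ : ∀ i, 1 < p i ∧ p i < ∞) (g : (Fin n → ℝ) → ℝ≥0∞)
      (_ : Measurable g) (_ : ∀ x ∉ cube0 n t, g x = 0),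
      ∫⁻ x, g x ≤ ENNReal.ofReal (2 * t) ^ ((n : ℝ) - sumInv p) * mixedNorm n p g
  | 0, p, _, g, _, _ => by
      have : (volume : Measure (Fin 0 → ℝ)) univ = 1 := by
        rw [volume_pi, Measure.pi_of_empty]; simp
      rw [lintegral_unique, this]
      simp [mixedNorm, sumInv]
      exact le_of_eq (congrArg g (Subsingleton.elim _ _))
  | (n + 1), p, hp, g, hg, hsupp => by
      set P := (p (Fin.last n)).toReal with hP
      have h1 : 1 < P := by
        have := ENNReal.toReal_strict_mono (hp (Fin.last n)).2.ne (hp (Fin.last n)).1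
        simpa using this
      have h0 : 0 < P := by linarith
      set I : ℝ → ℝ≥0∞ := fun s => ∫⁻ x : Fin n → ℝ, g (Fin.snoc x s) with hI
      set E := MeasurableEquiv.piFinSuccAbove (fun _ : Fin (n + 1) => ℝ) (Fin.last n)
      have hE : ∀ z : ℝ × (Fin n → ℝ), E.symm z = Fin.snoc z.2 z.1 := by
        intro z
        exact Fin.insertNth_last' z.1 z.2
      have hgE : Measurable (fun z : ℝ × (Fin n → ℝ) => g (Fin.snoc z.2 z.1)) := by
        have := hg.comp E.symm.measurable
        convert this using 2 with z
        rw [Function.comp, hE]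
      have hImeas : Measurable I := hgE.lintegral_prod_right'
      have hfub : ∫⁻ x, g x = ∫⁻ s, I s := by
        have hmp := (volume_preserving_piFinSuccAbove (fun _ : Fin (n + 1) => ℝ)
          (Fin.last n)).symm
        rw [← hmp.lintegral_comp hg, Measure.volume_eq_prod]
        have : ∀ z : ℝ × (Fin n → ℝ), g (E.symm z) = g (Fin.snoc z.2 z.1) := fun z => by rw [hE]
        exact (lintegral_congr this).trans (lintegral_prod _ hgE.aemeasurable)
      have hI0 : ∀ s ∉ Icc (-t) t, I s = 0 := by
        intro s hs
        simp only [hI]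
        rw [lintegral_congr (g := fun _ => 0), lintegral_zero]
        intro x
        exact hsupp _ (fun h => hs ((snoc_mem_cube0 x s).1 h).2)
      set a : ℝ≥0∞ := ENNReal.ofReal (2 * t) with ha
      have ha0 : a ≠ 0 := by simpa [ha] using ht
      have hat : a ≠ ∞ := ENNReal.ofReal_ne_top
      set m : ℝ → ℝ≥0∞ := fun s => mixedNorm n (fun i => p i.castSucc)
        (fun x => g (Fin.snoc x s)) with hm
      set b : ℝ≥0∞ := a ^ ((n : ℝ) - sumInv (fun i => p i.castSucc)) with hb
      have hbt : b ≠ ∞ := ENNReal.rpow_ne_top_of_ne_zero ha0 hat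
      have hIm : ∀ s, I s ≤ b * m s := by
        intro s
        by_cases hs : s ∈ Icc (-t) t
        · refine lintegral_le_mixedNorm ht n (fun i => p i.castSucc) (fun i => hp i.castSucc)
            (fun x => g (Fin.snoc x s)) ?_ ?_
          · exact hgE.comp (measurable_const.prodMk measurable_id)
          · intro x hx
            exact hsupp _ (fun h => hx ((snoc_mem_cube0 x s).1 h).1)
        · rw [hI0 s hs]; exact zero_le
      set P' := P.conjExponent
      have hPP : P.HolderConjugate P' := Real.HolderConjugate.conjExponent h1
      have hP' : 1 / P' = 1 - 1 / P := by
        have := hPP.inv_add_inv_eq_one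
        simp only [one_div]; linarith
      have hhol : ∫⁻ s, I s ≤ (∫⁻ s, I s ^ P) ^ (1 / P) * a ^ (1 - 1 / P) := by
        have h := ENNReal.lintegral_mul_le_Lp_mul_Lq volume hPP hImeas.aemeasurable
          (g := (Icc (-t) t).indicator (fun _ => 1))
          ((measurable_const.indicator measurableSet_Icc).aemeasurable)
        have e1 : (I * (Icc (-t) t).indicator (fun _ => 1)) = I := by
          ext s
          by_cases hs : s ∈ Icc (-t) t
          · simp [indicator_of_mem hs]
          · simp [indicator_of_notMem hs, hI0 s hs]
        have e2 : (fun s => (Icc (-t) t).indicator (fun _ => (1 : ℝ≥0∞)) s ^ P') =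
            (Icc (-t) t).indicator (fun _ => 1) := by
          ext s
          by_cases hs : s ∈ Icc (-t) t
          · simp [indicator_of_mem hs]
          · simp [indicator_of_notMem hs, hPP.symm.pos]
        rw [e1, e2, lintegral_indicator measurableSet_Icc, setLIntegral_const, Real.volume_Icc,
          one_mul, hP'] at h
        convert h using 4
        ring
      have hfin : (∫⁻ s, I s ^ P) ^ (1 / P) ≤ b * mixedNorm (n + 1) p g := by
        calc (∫⁻ s, I s ^ P) ^ (1 / P) ≤ (∫⁻ s, b ^ P * m s ^ P) ^ (1 / P) := by
              gcongr with s
              rw [← ENNReal.mul_rpow_of_nonneg _ _ h0.le]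
              gcongr
              exact hIm s
          _ = b * mixedNorm (n + 1) p g := by
              rw [lintegral_const_mul' _ _ (ENNReal.rpow_ne_top_of_nonneg h0.le hbt),
                ENNReal.mul_rpow_of_nonneg _ _ (by positivity), ← ENNReal.rpow_mul,
                mul_one_div_cancel h0.ne', ENNReal.rpow_one]
              simp only [mixedNorm, lpNormE, (hp (Fin.last n)).2.ne, if_false, hm, hP]
      rw [hfub]
      refine hhol.trans ?_
      calc (∫⁻ s, I s ^ P) ^ (1 / P) * a ^ (1 - 1 / P)
          ≤ (b * mixedNorm (n + 1) p g) * a ^ (1 - 1 / P) := by gcongr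
        _ = (b * a ^ (1 - 1 / P)) * mixedNorm (n + 1) p g := by ring
        _ = _ := by
            rw [hb, ← ENNReal.rpow_add _ _ ha0 hat, sumInv_succ]
            congr 2
            push_cast
            ring

/-! ### Minkowski's integral inequality -/

/-- Minkowski's integral inequality for `ℓ^v`-valued functions. With `a_j = ∫ f_j`, Hölder's
inequality for sums gives `∑ a_j^v = ∫ ∑ a_j^{v-1} f_j ≤ (∑ a_j^v)^{1-1/v} ∫ (∑ f_j^v)^{1/v}`. -/
lemma tsum_lintegral_rpow_le {α : Type*} [MeasurableSpace α] (μ : Measure α) {v : ℝ} (hv : 1 < v)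
    (f : ℕ → α → ℝ≥0∞) (hf : ∀ j, Measurable (f j)) :
    ∑' j, (∫⁻ x, f j x ∂μ) ^ v ≤ (∫⁻ x, (∑' j, f j x ^ v) ^ (1 / v) ∂μ) ^ v := by
  have hv0 : 0 < v := by linarith
  set B := ∫⁻ x, (∑' j, f j x ^ v) ^ (1 / v) ∂μ with hB
  rcases eq_or_ne B ∞ with hBt | hBt
  · rw [hBt, ENNReal.top_rpow_of_pos hv0]; exact le_top
  set a : ℕ → ℝ≥0∞ := fun j => ∫⁻ x, f j x ∂μ with ha
  have haB : ∀ j, a j ≤ B := by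
    intro j
    refine lintegral_mono fun x => ?_
    calc f j x = (f j x ^ v) ^ (1 / v) := by
          rw [← ENNReal.rpow_mul, mul_one_div_cancel hv0.ne', ENNReal.rpow_one]
      _ ≤ _ := by gcongr; exact ENNReal.le_tsum j
  have hat : ∀ j, a j ≠ ∞ := fun j => ne_top_of_le_ne_top hBt (haB j)
  rw [ENNReal.tsum_eq_iSup_sum]
  refine iSup_le fun s => ?_
  change ∑ j ∈ s, a j ^ v ≤ B ^ v
  set A := ∑ j ∈ s, a j ^ v with hA
  have hAt : A ≠ ∞ := by
    refine (ENNReal.sum_lt_top.2 fun j _ => ?_).ne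
    exact ENNReal.rpow_lt_top_of_nonneg hv0.le (hat j)
  rcases eq_or_ne A 0 with hA0 | hA0
  · rw [hA0]; exact zero_le
  set v' := v.conjExponent
  have hvv : v.HolderConjugate v' := Real.HolderConjugate.conjExponent hv
  have hv' : 1 / v' = 1 - 1 / v := by
    have := hvv.inv_add_inv_eq_one
    simp only [one_div]; linarith
  have hmul : (v - 1) * v' = v := hvv.sub_one_mul_conj
  have h1 : A ≤ A ^ (1 - 1 / v) * B := by
    calc A = ∑ j ∈ s, ∫⁻ x, a j ^ (v - 1) * f j x ∂μ := by
          refine Finset.sum_congr rfl fun j _ => ?_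
          rw [lintegral_const_mul _ (hf j)]
          change a j ^ v = a j ^ (v - 1) * a j
          conv_rhs => rw [← ENNReal.rpow_one (a j), ← ENNReal.rpow_mul, one_mul]
          rw [← ENNReal.rpow_add_of_nonneg _ _ (by linarith) zero_le_one]
          congr 1; ring
      _ = ∫⁻ x, ∑ j ∈ s, a j ^ (v - 1) * f j x ∂μ :=
          (lintegral_finsetSum _ fun j _ => (hf j).const_mul _).symm
      _ ≤ ∫⁻ x, A ^ (1 - 1 / v) * (∑' j, f j x ^ v) ^ (1 / v) ∂μ := by
          refine lintegral_mono fun x => ?_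
          refine (ENNReal.inner_le_Lp_mul_Lq s (fun j => a j ^ (v - 1)) (fun j => f j x)
            hvv.symm).trans ?_
          have hsum : ∑ j ∈ s, (a j ^ (v - 1)) ^ v' = A :=
            Finset.sum_congr rfl fun j _ => by rw [← ENNReal.rpow_mul, hmul]
          rw [hv', hsum]
          gcongr
          exact ENNReal.sum_le_tsum s
      _ = A ^ (1 - 1 / v) * B :=
          lintegral_const_mul' _ _ (ENNReal.rpow_ne_top_of_ne_zero hA0 hAt)
  have h2 : A ^ (1 / v) ≤ B := by
    have hne : A ^ (1 - 1 / v) ≠ 0 := by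
      simp [ENNReal.rpow_eq_zero_iff, hA0, hAt]
    have hnt : A ^ (1 - 1 / v) ≠ ∞ := ENNReal.rpow_ne_top_of_ne_zero hA0 hAt
    refine (ENNReal.mul_le_mul_iff_right hne hnt).1 ?_
    rw [← ENNReal.rpow_add _ _ hA0 hAt]
    simpa using h1
  calc A = (A ^ (1 / v)) ^ v := by
        rw [← ENNReal.rpow_mul, one_div_mul_cancel hv0.ne', ENNReal.rpow_one]
    _ ≤ B ^ v := by gcongr

/-! ### The maximal function of the far part -/

/-- A cube meeting both `Q(0,r)` and the complement of `Q(0,5r)` has radius `R > 2r`, hence lies in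
`Q(0,3R)`, so its average is controlled by one over a dyadic dilate `Q(0,2^k r)`. -/
lemma maximalE_far_le {n : ℕ} (h : (Fin n → ℝ) → ℝ≥0∞) {r : ℝ} (hr : 0 < r) {x : Fin n → ℝ}
    (hx : x ∈ cube0 n r) :
    maximalE (((cube0 n (5 * r))ᶜ).indicator h) x ≤
      ⨆ k : ℕ, 3 ^ n * (ENNReal.ofReal (2 ^ k * r) ^ n)⁻¹ * ∫⁻ y in cube0 n (2 ^ k * r), h y := by
  refine iSup_le fun c => iSup_le fun R => iSup_le fun hR => iSup_le fun hxc => ?_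
  by_cases hRr : R ≤ 2 * r
  · -- Small cubes stay inside `Q(0,5r)`, where the function vanishes.
    have : ∫⁻ y in cubeAt c R, ((cube0 n (5 * r))ᶜ).indicator h y = 0 := by
      rw [setLIntegral_congr_fun (g := fun _ => 0) (measurableSet_cubeAt c hR.le), lintegral_zero]
      intro y hy
      refine indicator_of_notMem (show y ∉ (cube0 n (5 * r))ᶜ from not_not.2 ?_) _
      intro i
      have h1 := abs_le.1 (hx i)
      have h2 := abs_le.1 (hxc i)
      have h3 := abs_le.1 (hy i)
      simp only [Pi.zero_apply, sub_zero] at h1 ⊢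
      rw [abs_le]; constructor <;> linarith
    rw [this, mul_zero]; exact zero_le
  · push Not at hRr
    obtain ⟨k, hk1, hk2⟩ := exists_nat_pow_near (x := 3 * R / r) (y := (2 : ℝ))
      (by rw [le_div_iff₀ hr]; linarith) one_lt_two
    rw [le_div_iff₀ hr] at hk1
    rw [div_lt_iff₀ hr] at hk2
    refine le_trans ?_ (le_iSup _ (k + 1))
    set t : ℝ := 2 ^ (k + 1) * r with ht
    have ht6 : t ≤ 3 * (2 * R) := by rw [ht, pow_succ]; linarith
    rw [volume_cubeAt c hR.le]
    gcongr ?_ * ?_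
    · have h3 : ENNReal.ofReal t ≤ 3 * ENNReal.ofReal (2 * R) := by
        calc ENNReal.ofReal t ≤ ENNReal.ofReal (3 * (2 * R)) := ENNReal.ofReal_le_ofReal ht6
          _ = _ := by rw [ENNReal.ofReal_mul (by norm_num)]; norm_num
      rw [← div_eq_mul_inv, ENNReal.le_div_iff_mul_le (Or.inl (by positivity))
        (Or.inl (ENNReal.pow_ne_top ENNReal.ofReal_ne_top)), mul_comm, ← div_eq_mul_inv]
      refine ENNReal.div_le_of_le_mul ?_
      rw [← mul_pow]
      gcongr
    · calc ∫⁻ y in cubeAt c R, ((cube0 n (5 * r))ᶜ).indicator h y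
          ≤ ∫⁻ y in cubeAt c R, h y := lintegral_mono fun y => indicator_le_self _ _ y
        _ ≤ _ := by
            refine lintegral_mono_set ?_
            intro y hy i
            have h1 := abs_le.1 (hx i)
            have h2 := abs_le.1 (hxc i)
            have h3 := abs_le.1 (hy i)
            simp only [Pi.zero_apply, sub_zero] at h1 ⊢
            rw [abs_le]; constructor <;> linarith

/-! ### The Morrey scale and a discrete Hardy-type inequality -/

lemma morreyScale_mono {q : ℝ≥0∞} {lam : ℝ} {A B : ℝ → ℝ≥0∞} (h : ∀ r, 0 < r → A r ≤ B r) :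
    morreyScale q lam A ≤ morreyScale q lam B := by
  unfold morreyScale
  split_ifs
  · refine essSup_mono_ae ?_
    filter_upwards [ae_restrict_mem measurableSet_Ioi] with r hr
    gcongr
    exact h r hr
  · gcongr ?_ ^ _
    refine setLIntegral_mono' measurableSet_Ioi fun r hr => ?_
    gcongr
    exact h r hr

lemma morreyScale_const_mul {q : ℝ≥0∞} (hq : 0 < q) {lam : ℝ} {A : ℝ → ℝ≥0∞} {c : ℝ≥0∞}
    (hc : c ≠ ∞) : morreyScale q lam (fun r => c * A r) = c * morreyScale q lam A := by
  unfold morreyScale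
  split_ifs with h
  · rw [← ENNReal.essSup_const_mul]
    congr 1; ext r; ring
  · have h0 := ENNReal.toReal_pos hq.ne' h
    have e : ∀ r, (ENNReal.ofReal (r ^ (-lam)) * (c * A r)) ^ q.toReal * ENNReal.ofReal r⁻¹ =
        c ^ q.toReal *
          ((ENNReal.ofReal (r ^ (-lam)) * A r) ^ q.toReal * ENNReal.ofReal r⁻¹) := by
      intro r
      rw [show ENNReal.ofReal (r ^ (-lam)) * (c * A r) =
        c * (ENNReal.ofReal (r ^ (-lam)) * A r) by ring, ENNReal.mul_rpow_of_nonneg _ _ h0.le]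
      ring
    simp_rw [e]
    rw [lintegral_const_mul' _ _ (ENNReal.rpow_ne_top_of_nonneg h0.le hc),
      ENNReal.mul_rpow_of_nonneg _ _ (by positivity), ← ENNReal.rpow_mul,
      mul_one_div_cancel h0.ne', ENNReal.rpow_one]

/-- Invariance of `dr/r` under dilations. -/
lemma lintegral_Ioi_scale (G : ℝ → ℝ≥0∞) {c : ℝ} (hc : 0 < c) :
    ∫⁻ r in Ioi (0 : ℝ), G (c * r) * ENNReal.ofReal r⁻¹ =
      ∫⁻ r in Ioi (0 : ℝ), G r * ENNReal.ofReal r⁻¹ := by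
  set H : ℝ → ℝ≥0∞ := (Ioi (0 : ℝ)).indicator (fun r => G r * ENNReal.ofReal r⁻¹) with hH
  have h1 : ∫⁻ r, H (c * r) = ENNReal.ofReal c⁻¹ * ∫⁻ r, H r := by
    have h := lintegral_map_equiv (μ := volume) H (Homeomorph.mulLeft₀ c hc.ne').toMeasurableEquiv
    have h2 : Measure.map (⇑(Homeomorph.mulLeft₀ c hc.ne').toMeasurableEquiv) volume =
        ENNReal.ofReal |c⁻¹| • volume := Real.map_volume_mul_left hc.ne'
    rw [h2, lintegral_smul_measure, abs_of_pos (inv_pos.2 hc)] at h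
    exact h.symm
  have h2 : ∀ r, (Ioi (0 : ℝ)).indicator (fun r => G (c * r) * ENNReal.ofReal r⁻¹) r =
      ENNReal.ofReal c * H (c * r) := by
    intro r
    by_cases hr : 0 < r
    · have hcr : c * r ∈ Ioi (0 : ℝ) := mul_pos hc hr
      rw [indicator_of_mem (show r ∈ Ioi (0 : ℝ) from hr), hH, indicator_of_mem hcr,
        mul_left_comm, ← ENNReal.ofReal_mul hc.le]
      congr 2
      field_simp
    · have hcr : c * r ∉ Ioi (0 : ℝ) := by
        simp only [mem_Ioi, not_lt] at hr ⊢
        exact mul_nonpos_of_nonneg_of_nonpos hc.le hr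
      rw [indicator_of_notMem (show r ∉ Ioi (0 : ℝ) from hr), hH, indicator_of_notMem hcr,
        mul_zero]
  rw [← lintegral_indicator measurableSet_Ioi, ← lintegral_indicator measurableSet_Ioi,
    lintegral_congr h2, lintegral_const_mul' _ _ ENNReal.ofReal_ne_top, h1, ← mul_assoc,
    ← ENNReal.ofReal_mul hc.le, mul_inv_cancel₀ hc.ne', ENNReal.ofReal_one, one_mul]

/-- A discrete Hardy-type inequality. The supremum over `k` is taken inside the Morrey scale because
`(sup a_k)^q ≤ ∑ a_k^q` holds for every `q > 0`, so that no triangle inequality is needed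
when `q < 1`. -/
lemma morreyScale_iSup_le {q : ℝ≥0∞} (hq : 0 < q) {lam : ℝ} (hlam : 0 ≤ lam) {d e : ℝ≥0∞}
    (hd : d < 1) (he : e = d * ENNReal.ofReal (2 ^ (-lam))) :
    ∃ C : ℝ≥0∞, C ≠ ∞ ∧ ∀ N : ℝ → ℝ≥0∞, Monotone N →
      morreyScale q lam (fun r => ⨆ k : ℕ, e ^ k * N (2 ^ k * r)) ≤ C * morreyScale q lam N := by
  have scale : ∀ (N : ℝ → ℝ≥0∞) (k : ℕ) (r : ℝ), 0 < r →
      ENNReal.ofReal (r ^ (-lam)) * (e ^ k * N (2 ^ k * r)) =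
        d ^ k * (ENNReal.ofReal ((2 ^ k * r) ^ (-lam)) * N (2 ^ k * r)) := by
    intro N k r hr
    rw [he, Real.mul_rpow (by positivity) hr.le, ENNReal.ofReal_mul (by positivity), mul_pow,
      ← ENNReal.ofReal_pow (by positivity), ← Real.rpow_natCast, ← Real.rpow_natCast,
      ← Real.rpow_mul (by norm_num), ← Real.rpow_mul (by norm_num), mul_comm (k : ℝ)]
    ring
  by_cases h : q = ∞
  · refine ⟨ENNReal.ofReal (2 ^ lam), ENNReal.ofReal_ne_top, fun N hN => ?_⟩
    simp only [morreyScale, h, if_true]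
    set Φ : ℝ → ℝ≥0∞ := fun s => ENNReal.ofReal (s ^ (-lam)) * N s with hΦ
    set B := essSup Φ (volume.restrict (Ioi (0 : ℝ))) with hB
    -- Monotonicity of `N` upgrades the almost everywhere bound to a bound at every point.
    have key : ∀ s, 0 < s → Φ s ≤ ENNReal.ofReal (2 ^ lam) * B := by
      intro s hs
      have hae : ∀ᵐ u ∂(volume.restrict (Ioo s (2 * s))), Φ u ≤ B :=
        ae_mono (Measure.restrict_mono (fun u hu => hs.trans hu.1) le_rfl) (ENNReal.ae_le_essSup Φ)
      have hne : volume.restrict (Ioo s (2 * s)) ≠ 0 := by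
        rw [Ne, Measure.restrict_eq_zero, Real.volume_Ioo]
        simpa using by linarith
      have : (ae (volume.restrict (Ioo s (2 * s)))).NeBot := ae_neBot.2 hne
      obtain ⟨u, hu, hus⟩ := (hae.and (ae_restrict_mem measurableSet_Ioo)).exists
      have hu0 : 0 < u := hs.trans hus.1
      calc Φ s ≤ ENNReal.ofReal (2 ^ lam * u ^ (-lam)) * N u := by
            simp only [hΦ]
            gcongr
            · have h1 : (2 * s) ^ (-lam) ≤ u ^ (-lam) :=
                Real.rpow_le_rpow_of_nonpos hu0 hus.2.le (by linarith)
              rw [Real.mul_rpow (by norm_num) hs.le, Real.rpow_neg (by norm_num)] at h1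
              have h2 : (0 : ℝ) < 2 ^ lam := by positivity
              calc s ^ (-lam) = 2 ^ lam * ((2 ^ lam)⁻¹ * s ^ (-lam)) := by field_simp
                _ ≤ _ := by gcongr
            · exact hN hus.1.le
        _ = ENNReal.ofReal (2 ^ lam) * Φ u := by
            rw [ENNReal.ofReal_mul (by positivity), mul_assoc]
        _ ≤ _ := by gcongr
    refine essSup_le_of_ae_le _ ?_
    filter_upwards [ae_restrict_mem measurableSet_Ioi] with r hr
    rw [ENNReal.mul_iSup]
    refine iSup_le fun k => ?_
    rw [scale N k r hr]
    calc _ ≤ 1 * Φ (2 ^ k * r) := by gcongr; exact pow_le_one' hd.le k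
      _ ≤ _ := by rw [one_mul]; exact key _ (mul_pos (by positivity) hr)
  · set Q := q.toReal with hQ
    have h0 : 0 < Q := ENNReal.toReal_pos hq.ne' h
    have hdQ : d ^ Q < 1 := ENNReal.rpow_lt_one hd h0
    set c : ℝ≥0∞ := (1 - d ^ Q)⁻¹ with hc
    have hct : c ≠ ∞ := ENNReal.inv_ne_top.2 (tsub_pos_of_lt hdQ).ne'
    refine ⟨c ^ (1 / Q), ENNReal.rpow_ne_top_of_nonneg (by positivity) hct, fun N hN => ?_⟩
    simp only [morreyScale, h, if_false, ← hQ]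
    rw [← ENNReal.mul_rpow_of_nonneg _ _ (by positivity)]
    gcongr ?_ ^ _
    set G : ℝ → ℝ≥0∞ := fun s => (ENNReal.ofReal (s ^ (-lam)) * N s) ^ Q with hG
    have hGm : Measurable G := by
      have := hN.measurable
      fun_prop
    calc ∫⁻ r in Ioi (0 : ℝ), (ENNReal.ofReal (r ^ (-lam)) * ⨆ k : ℕ, e ^ k * N (2 ^ k * r)) ^ Q *
          ENNReal.ofReal r⁻¹
        ≤ ∫⁻ r in Ioi (0 : ℝ), ∑' k : ℕ, (d ^ Q) ^ k * (G (2 ^ k * r) * ENNReal.ofReal r⁻¹) := by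
          refine setLIntegral_mono' measurableSet_Ioi fun r hr => ?_
          simp_rw [← mul_assoc]
          rw [ENNReal.tsum_mul_right]
          gcongr
          rw [ENNReal.mul_iSup]
          refine (ENNReal.rpow_le_rpow_iff (inv_pos.2 h0)).1 ?_
          rw [ENNReal.rpow_rpow_inv h0.ne']
          refine iSup_le fun k => ?_
          rw [scale N k r hr, ← ENNReal.rpow_le_rpow_iff h0, ENNReal.rpow_inv_rpow h0.ne']
          refine le_trans (le_of_eq ?_) (ENNReal.le_tsum k)
          rw [ENNReal.mul_rpow_of_nonneg _ _ h0.le, hG, ← ENNReal.rpow_natCast,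
            ← ENNReal.rpow_natCast, ← ENNReal.rpow_mul, ← ENNReal.rpow_mul, mul_comm Q]
      _ = ∑' k : ℕ, (d ^ Q) ^ k * ∫⁻ r in Ioi (0 : ℝ), G (2 ^ k * r) * ENNReal.ofReal r⁻¹ := by
          rw [lintegral_tsum (fun k => by fun_prop)]
          refine tsum_congr fun k => ?_
          rw [lintegral_const_mul]
          fun_prop
      _ = c * ∫⁻ r in Ioi (0 : ℝ), G r * ENNReal.ofReal r⁻¹ := by
          simp_rw [lintegral_Ioi_scale G (show (0 : ℝ) < 2 ^ _ by positivity)]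
          rw [ENNReal.tsum_mul_right, ENNReal.tsum_geometric]

/-- Passage from an `ℓ^v` sum to a supremum at the cost of a geometric factor `d^k`. -/
lemma tsum_rpow_le_iSup {v : ℝ} (hv : 0 < v) (d e : ℝ≥0∞) (a : ℕ → ℝ≥0∞) :
    (∑' k, ((d * e) ^ k * a k) ^ v) ^ (1 / v) ≤
      ((1 - d ^ v)⁻¹) ^ (1 / v) * ⨆ k, e ^ k * a k := by
  set s := ⨆ k, e ^ k * a k with hs
  calc (∑' k, ((d * e) ^ k * a k) ^ v) ^ (1 / v) ≤ (∑' k, (d ^ v) ^ k * s ^ v) ^ (1 / v) := by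
        gcongr with k
        have hdk : (d ^ k) ^ v = (d ^ v) ^ k := by
          rw [← ENNReal.rpow_natCast, ← ENNReal.rpow_natCast, ← ENNReal.rpow_mul,
            ← ENNReal.rpow_mul, mul_comm v]
        rw [mul_pow, mul_assoc, ENNReal.mul_rpow_of_nonneg _ _ hv.le, hdk]
        gcongr
        exact le_iSup (fun k => e ^ k * a k) k
    _ = _ := by
        rw [ENNReal.tsum_mul_right, ENNReal.tsum_geometric,
          ENNReal.mul_rpow_of_nonneg _ _ (by positivity), ← ENNReal.rpow_mul s,
          mul_one_div_cancel hv.ne', ENNReal.rpow_one]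

/-! ### The estimate at a fixed radius -/

lemma monotone_mixedNormOn_cube0 {n : ℕ} {p : Fin n → ℝ≥0∞} (hp : ∀ i, 1 < p i ∧ p i < ∞)
    (g : (Fin n → ℝ) → ℝ≥0∞) : Monotone (fun r => mixedNormOn n p g (cube0 n r)) := by
  intro r s hrs
  refine mixedNorm_mono n p (fun i => (hp i).2.ne) fun x => ?_
  exact indicator_le_indicator_of_subset (fun x hx i => (hx i).trans hrs) (fun _ => zero_le) x

/-- The pointwise-in-`r` estimate: the far part on `Q(0,r)` is controlled by the local norms of
`G = (∑ |f_j|^v)^{1/v}` on the dyadic dilates `Q(0,2^k r)`, with weights `2^{-kS}`,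
`S = ∑ 1/pᵢ`. -/
lemma far_part_le {n : ℕ} {p : Fin n → ℝ≥0∞} (hp : ∀ i, 1 < p i ∧ p i < ∞) {v : ℝ} (hv : 1 < v)
    (f : ℕ → (Fin n → ℝ) → ℝ≥0∞) (hf : ∀ j, Measurable (f j)) {r : ℝ} (hr : 0 < r) :
    mixedNormOn n p (fun x => (∑' j,
        (maximalE (((cube0 n (5 * r))ᶜ).indicator (f j)) x) ^ v) ^ (1 / v)) (cube0 n r) ≤
      6 ^ n * (∑' k : ℕ, (ENNReal.ofReal (2 ^ (-sumInv p)) ^ k *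
        mixedNormOn n p (fun x => (∑' j, f j x ^ v) ^ (1 / v)) (cube0 n (2 ^ k * r))) ^ v) ^
          (1 / v) := by
  have hv0 : 0 < v := by linarith
  set S := sumInv p with hS
  set G : (Fin n → ℝ) → ℝ≥0∞ := fun x => (∑' j, f j x ^ v) ^ (1 / v) with hG
  have hGm : Measurable G :=
    (Measurable.tsum fun j => (hf j).pow_const v).pow_const _
  set N : ℝ → ℝ≥0∞ := fun t => mixedNormOn n p G (cube0 n t) with hN
  set ρ := ENNReal.ofReal (2 * r) ^ (-S) with hρ
  have hr2 : ENNReal.ofReal (2 * r) ≠ 0 := by simpa using hr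
  set b : ℕ → ℝ≥0∞ := fun k => ENNReal.ofReal (2 ^ (-S)) ^ k * N (2 ^ k * r) with hb
  -- Hölder's inequality on `Q(0,t)`, `t = 2^k r`, divided by the volume.
  have hol : ∀ k : ℕ, 3 ^ n * (ENNReal.ofReal (2 ^ k * r) ^ n)⁻¹ *
      ∫⁻ y in cube0 n (2 ^ k * r), G y ≤ 6 ^ n * ρ * b k := by
    intro k
    have ht : (0 : ℝ) < 2 ^ k * r := by positivity
    set t : ℝ := 2 ^ k * r with htd
    have hms : MeasurableSet (cube0 n t) := measurableSet_cubeAt 0 ht.le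
    have h1 : ∫⁻ y in cube0 n t, G y ≤ ENNReal.ofReal (2 * t) ^ ((n : ℝ) - S) * N t := by
      rw [← lintegral_indicator hms]
      exact lintegral_le_mixedNorm ht n p hp _ (hGm.indicator hms)
        (fun x hx => indicator_of_notMem hx _)
    have ht0 : ENNReal.ofReal t ≠ 0 := by simpa using ht
    have h2t : ENNReal.ofReal (2 * t) ≠ 0 := by simpa using ht
    have h2 : ENNReal.ofReal (2 * t) ^ ((n : ℝ) - S) =
        2 ^ n * ENNReal.ofReal t ^ n * (ρ * ENNReal.ofReal (2 ^ (-S)) ^ k) := by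
      rw [sub_eq_add_neg, ENNReal.rpow_add _ _ h2t ENNReal.ofReal_ne_top, ENNReal.rpow_natCast,
        ENNReal.ofReal_mul (by norm_num), mul_pow]
      congr 1
      · norm_num
      · rw [← ENNReal.ofReal_mul (by norm_num), hρ, ENNReal.ofReal_rpow_of_pos (by positivity),
          ENNReal.ofReal_rpow_of_pos (by positivity), ← ENNReal.ofReal_pow (by positivity),
          ← ENNReal.ofReal_mul (by positivity), ← Real.rpow_natCast, ← Real.rpow_mul (by norm_num),
          show 2 * t = (2 * r) * 2 ^ k by rw [htd]; ring, Real.mul_rpow (by positivity)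
          (by positivity), ← Real.rpow_natCast, ← Real.rpow_mul (by norm_num), mul_comm (k : ℝ)]
    calc 3 ^ n * (ENNReal.ofReal t ^ n)⁻¹ * ∫⁻ y in cube0 n t, G y
        ≤ 3 ^ n * (ENNReal.ofReal t ^ n)⁻¹ * (ENNReal.ofReal (2 * t) ^ ((n : ℝ) - S) * N t) := by
          gcongr
      _ = (3 ^ n * 2 ^ n) * ((ENNReal.ofReal t ^ n)⁻¹ * ENNReal.ofReal t ^ n) *
            ρ * (ENNReal.ofReal (2 ^ (-S)) ^ k * N t) := by rw [h2]; ring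
      _ = 6 ^ n * ρ * b k := by
          rw [ENNReal.inv_mul_cancel (pow_ne_zero _ ht0)
            (ENNReal.pow_ne_top ENNReal.ofReal_ne_top), ← mul_pow]
          norm_num [hb, htd]
  have hpt : ∀ x ∈ cube0 n r, (∑' j,
      (maximalE (((cube0 n (5 * r))ᶜ).indicator (f j)) x) ^ v) ^ (1 / v) ≤
      6 ^ n * ρ * (∑' k, b k ^ v) ^ (1 / v) := by
    intro x hx
    calc (∑' j, (maximalE (((cube0 n (5 * r))ᶜ).indicator (f j)) x) ^ v) ^ (1 / v)
        ≤ (∑' j, ∑' k : ℕ, (3 ^ n * (ENNReal.ofReal (2 ^ k * r) ^ n)⁻¹ *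
            ∫⁻ y in cube0 n (2 ^ k * r), f j y) ^ v) ^ (1 / v) := by
          gcongr with j
          rw [← ENNReal.rpow_le_rpow_iff (inv_pos.2 hv0), ENNReal.rpow_rpow_inv hv0.ne']
          refine (maximalE_far_le (f j) hr hx).trans (iSup_le fun k => ?_)
          rw [← ENNReal.rpow_le_rpow_iff hv0, ENNReal.rpow_inv_rpow hv0.ne']
          exact ENNReal.le_tsum (f := fun k : ℕ => (3 ^ n * (ENNReal.ofReal (2 ^ k * r) ^ n)⁻¹ *
            ∫⁻ y in cube0 n (2 ^ k * r), f j y) ^ v) k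
      _ ≤ (∑' k : ℕ, (6 ^ n * ρ) ^ v * b k ^ v) ^ (1 / v) := by
          rw [ENNReal.tsum_comm]
          gcongr with k
          simp_rw [ENNReal.mul_rpow_of_nonneg _ (∫⁻ y in cube0 n (2 ^ k * r), _) hv0.le]
          rw [ENNReal.tsum_mul_left]
          refine (mul_le_mul_right (tsum_lintegral_rpow_le _ hv f hf) _).trans ?_
          rw [← ENNReal.mul_rpow_of_nonneg _ _ hv0.le, ← ENNReal.mul_rpow_of_nonneg _ _ hv0.le]
          exact ENNReal.rpow_le_rpow (hol k) hv0.le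
      _ = _ := by
          rw [ENNReal.tsum_mul_left, ENNReal.mul_rpow_of_nonneg _ _ (by positivity),
            ← ENNReal.rpow_mul, mul_one_div_cancel hv0.ne', ENNReal.rpow_one]
  calc _ ≤ mixedNorm n p ((cube0 n r).indicator
        (fun _ => 6 ^ n * ρ * (∑' k, b k ^ v) ^ (1 / v))) := by
        refine mixedNorm_mono n p (fun i => (hp i).2.ne) fun x => ?_
        by_cases hx : x ∈ cube0 n r
        · rw [indicator_of_mem hx, indicator_of_mem hx]; exact hpt x hx
        · rw [indicator_of_notMem hx, indicator_of_notMem hx]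
    _ ≤ 6 ^ n * ρ * (∑' k, b k ^ v) ^ (1 / v) * ENNReal.ofReal (2 * r) ^ S :=
        mixedNorm_const_cube _ hr n p hp
    _ = 6 ^ n * (∑' k, b k ^ v) ^ (1 / v) * (ρ * ENNReal.ofReal (2 * r) ^ S) := by ring
    _ = 6 ^ n * (∑' k, b k ^ v) ^ (1 / v) := by
        rw [hρ, ← ENNReal.rpow_add _ _ hr2 ENNReal.ofReal_ne_top, neg_add_cancel,
          ENNReal.rpow_zero, mul_one]

end LMM

open LMM

/-- the "far-away part" estimate in the vector-valued maximal
inequality on `LM^λ_{p,q}`: with `f_{j,2} = f_j χ_{ℝ^n ∖ Q(0,5r)}`,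
`(∫_0^∞ r^{-λq} ‖(Σ_j (M f_{j,2})^v)^{1/v} χ_{Q(0,r)}‖_{L^{p}}^q dr/r)^{1/q}
  ≤ C ‖(Σ_j |f_j|^v)^{1/v}‖_{LM^λ_{p,q}}`. -/
theorem statement6 (n : ℕ) (p : Fin n → ℝ≥0∞) (q : ℝ≥0∞) (v lam : ℝ)
    (hp : ∀ i, 1 < p i ∧ p i < ∞) (hq : 0 < q) (hv : 1 < v)
    (hlam0 : 0 ≤ lam) (hlam : lam < sumInv p) :
    ∃ C : ℝ≥0, ∀ F : ℕ → (Fin n → ℝ) → ℝ, (∀ j, Measurable (F j)) →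
      morreyScale q lam (fun r =>
          mixedNormOn n p
            (fun x => (∑' j,
                (maximalE (((cube0 n (5 * r))ᶜ).indicator
                  (fun y => (‖F j y‖₊ : ℝ≥0∞))) x) ^ v) ^ (1 / v))
            (cube0 n r)) ≤
        C * LMlamQ n p q lam (fun x => (∑' j, ((‖F j x‖₊ : ℝ≥0∞)) ^ v) ^ (1 / v)) := by
  -- Split `2^{-S} = d · e` with `d = 2^{-δ}`, `e = d · 2^{-λ}` and `δ = (S - λ)/2 > 0`: one factor
  -- `d` pays for the `ℓ^v` sum over `k`, the other for the sum over `k` after integration in `r`.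
  set S := sumInv p with hS
  set d : ℝ≥0∞ := ENNReal.ofReal (2 ^ (-((S - lam) / 2))) with hd
  set e : ℝ≥0∞ := d * ENNReal.ofReal (2 ^ (-lam)) with he
  have hv0 : 0 < v := by linarith
  have hd1 : d < 1 := by
    rw [hd, ENNReal.ofReal_lt_one]
    exact Real.rpow_lt_one_of_one_lt_of_neg one_lt_two (by linarith)
  have hde : ENNReal.ofReal (2 ^ (-S)) = d * e := by
    rw [he, hd, ← ENNReal.ofReal_mul (by positivity), ← ENNReal.ofReal_mul (by positivity),
      ← Real.rpow_add (by norm_num), ← Real.rpow_add (by norm_num)]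
    congr 2; ring
  obtain ⟨C, hC, hCN⟩ := morreyScale_iSup_le hq hlam0 hd1 he
  set K : ℝ≥0∞ := 6 ^ n * ((1 - d ^ v)⁻¹) ^ (1 / v) with hK
  have hKt : K ≠ ∞ := by
    refine ENNReal.mul_ne_top (by finiteness) (ENNReal.rpow_ne_top_of_nonneg (by positivity) ?_)
    exact ENNReal.inv_ne_top.2 (tsub_pos_of_lt (ENNReal.rpow_lt_one hd1 hv0)).ne'
  refine ⟨(K * C).toNNReal, fun F hF => ?_⟩
  rw [ENNReal.coe_toNNReal (ENNReal.mul_ne_top hKt hC)]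
  set f : ℕ → (Fin n → ℝ) → ℝ≥0∞ := fun j y => (‖F j y‖₊ : ℝ≥0∞) with hf
  have hfm : ∀ j, Measurable (f j) := fun j => (hF j).nnnorm.coe_nnreal_ennreal
  set N : ℝ → ℝ≥0∞ := fun t =>
    mixedNormOn n p (fun x => (∑' j, f j x ^ v) ^ (1 / v)) (cube0 n t) with hN
  calc _ ≤ morreyScale q lam (fun r => K * ⨆ k : ℕ, e ^ k * N (2 ^ k * r)) := by
        refine morreyScale_mono fun r hr => (far_part_le hp hv f hfm hr).trans ?_
        rw [← hS, hde, hK, mul_assoc]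
        gcongr
        exact tsum_rpow_le_iSup hv0 d e (fun k => N (2 ^ k * r))
    _ = K * morreyScale q lam (fun r => ⨆ k : ℕ, e ^ k * N (2 ^ k * r)) :=
        morreyScale_const_mul hq hKt
    _ ≤ K * (C * morreyScale q lam N) := by
        gcongr
        exact hCN N (monotone_mixedNormOn_cube0 hp _)
    _ = K * C * morreyScale q lam N := (mul_assoc _ _ _).symm
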